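/- Let Q > 2 be an integer, ζ_Q = exp(2πi/Q), let π, σ be permutations of ℤ/Qℤ, and fix ℓ ∈ ℤ/Qℤ. For integers a, b, u, b̂, û with b ≢ b̂ (mod Q), the Hermitian inner product of the punctured vectors G_{a,b,u} and G_{a,b̂,û} is zero. -/

import Mathlib

/-!
For fixed `i`, the phases of the two vectors are affine in `j`, with slopes `aπ(i) + b` and
`aπ(i) + b̂`. Hence each term of the inner product is a factor independent of `j` times
`ζ_Q ^ (j(b - b̂))`, and the sum of this nontrivial additive character over `j ∈ ℤ/Qℤ` vanishes.
The inner product thus vanishes row by row, whichever row `ℓ` is deleted.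
-/

theorem exp_two_pi_I_div_pow_val_eq_stdAddChar (N : ℕ) [NeZero N] (z : ZMod N) :
    Complex.exp (2 * Real.pi * Complex.I / N) ^ z.val = ZMod.stdAddChar z := by
  rw [ZMod.stdAddChar_apply, ZMod.toCircle_apply, ← Complex.exp_nat_mul]
  congr 1
  ring

theorem addChar_mul_conj_eq_map_sub {G K : Type*} [AddCommGroup G] [Finite G] [RCLike K]
    (ψ : AddChar G K) (x y : G) : ψ x * (starRingEnd K) (ψ y) = ψ (x - y) := by
  rw [sub_eq_add_neg, AddChar.map_add_eq_mul, AddChar.map_neg_eq_conj]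

theorem sum_addChar_affine_mul_conj_eq_zero {R K : Type*} [CommRing R] [Fintype R] [RCLike K]
    {ψ : AddChar R K} (hψ : ψ.IsPrimitive) {x y : R} (hxy : x ≠ y) (s t : R) :
    ∑ j, ψ (j * x + s) * (starRingEnd K) (ψ (j * y + t)) = 0 := by
  classical
  calc
    ∑ j, ψ (j * x + s) * (starRingEnd K) (ψ (j * y + t))
        = ∑ j, ψ (s - t) * ψ (j * (x - y)) := by
      refine Finset.sum_congr rfl fun j _ => ?_
      rw [addChar_mul_conj_eq_map_sub, ← AddChar.map_add_eq_mul]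
      congr 1
      ring
    _ = ψ (s - t) * ∑ j, ψ (j * (x - y)) := (Finset.mul_sum ..).symm
    _ = 0 := by
      rw [AddChar.sum_mulShift _ hψ, if_neg (sub_ne_zero.mpr hxy), Nat.cast_zero, mul_zero]

theorem inner_G_eq_zero_of_b_ne_general {ι : Type*} [Fintype ι] {Q : ℕ} [NeZero Q]
    (c d : ι → ℂ) {x y : ι → ZMod Q} (hxy : ∀ i, x i ≠ y i) (s t : ι → ZMod Q) :
    ∑ k : ι × ZMod Q,
      (c k.1 * Complex.exp (2 * Real.pi * Complex.I / Q) ^ (k.2 * x k.1 + s k.1).val) *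
      (starRingEnd ℂ)
        (d k.1 * Complex.exp (2 * Real.pi * Complex.I / Q) ^ (k.2 * y k.1 + t k.1).val) = 0 := by
  rw [Fintype.sum_prod_type]
  refine Finset.sum_eq_zero fun i _ => ?_
  simp_rw [exp_two_pi_I_div_pow_val_eq_stdAddChar, map_mul, mul_mul_mul_comm (c i),
    ← Finset.mul_sum]
  rw [sum_addChar_affine_mul_conj_eq_zero (ZMod.isPrimitive_stdAddChar Q) (hxy i), mul_zero]

/-- Let `Q > 2`, `ζ_Q = exp(2πi/Q)`, `π, σ` permutations of `ℤ/Qℤ`, and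
fix `ℓ ∈ ℤ/Qℤ`. For integers `a, b, u, b̂, û` with `b ≢ b̂ (mod Q)`, the Hermitian inner
product of the punctured vectors `G_{a,b,u}` and `G_{a,b̂,û}` is zero. -/
theorem inner_G_eq_zero_of_b_ne (Q : ℕ) [NeZero Q] (hQ : 2 < Q)
    (pe se : Equiv.Perm (ZMod Q)) (ℓ : ZMod Q) (a b u b' u' : ℤ)
    (h : (b : ZMod Q) ≠ (b' : ZMod Q)) :
    ∑ k : {i : ZMod Q // i ≠ ℓ} × ZMod Q,
      ((1 / (Real.sqrt ((Q : ℝ) * ((Q : ℝ) - 1)) : ℂ)) *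
        Complex.exp (2 * Real.pi * Complex.I / Q) ^
          (k.2 * ((a : ZMod Q) * pe k.1.1 + (b : ZMod Q)) + (u : ZMod Q) * se k.1.1).val) *
      (starRingEnd ℂ) ((1 / (Real.sqrt ((Q : ℝ) * ((Q : ℝ) - 1)) : ℂ)) *
        Complex.exp (2 * Real.pi * Complex.I / Q) ^
          (k.2 * ((a : ZMod Q) * pe k.1.1 + (b' : ZMod Q)) + (u' : ZMod Q) * se k.1.1).val)
      = 0 := by
  exact inner_G_eq_zero_of_b_ne_general (ι := {i // i ≠ ℓ}) (fun _ => _) (fun _ => _)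
    (fun i => (add_right_injective (a * pe i : ZMod Q)).ne h) (fun i => u * se i) fun i => u' * se i
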